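/- arXiv:1712.06078 — 3 statements merged into one kernel-verified Lean document; each statement's English description precedes it below -/
import Mathlib

section
/- Let d ≥ 1 and let P ⊂ ℝ^d be a d-dimensional lattice polytope which is the convex hull of a subset of the set S = {0} ∪ {e_i : 1 ≤ i ≤ d} ∪ {e_i + e_j : 1 ≤ i ≤ j ≤ d}. Then the origin of ℝ^{d+1} belongs to the interior of Ω(P) = Ω(P,P), and Ω(P) is a reflexive polytope. -/
/-- The set `S = {0} ∪ {e_i} ∪ {e_i + e_j : i ≤ j}` of `(0,1,2)`-vectors. -/
def stdSet (d : ℕ) : Set (Fin d → ℝ) :=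
  {0} ∪ {x | ∃ i : Fin d, x = Pi.single i 1} ∪
    {x | ∃ i j : Fin d, i ≤ j ∧ x = Pi.single i 1 + Pi.single j 1}

/-- `Ω(P,Q) = conv((P × {1}) ∪ ((−Q) × {−1})) ⊆ ℝ^{d+1}`. -/
def Omega {d : ℕ} (P Q : Set (Fin d → ℝ)) : Set (Fin (d + 1) → ℝ) :=
  convexHull ℝ
    ((fun p => Fin.snoc p (1 : ℝ)) '' P ∪ (fun q => Fin.snoc (-q) (-1 : ℝ)) '' Q)

/-- A point of `ℝ^m` is a lattice point if all of its coordinates are integers. -/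
def IsLatticePt {m : ℕ} (x : Fin m → ℝ) : Prop := ∀ i, ∃ z : ℤ, x i = (z : ℝ)

/-- The dual polytope `R^∨ = {y : ⟨x,y⟩ ≤ 1 for all x ∈ R}`. -/
def dualPolytope {m : ℕ} (R : Set (Fin m → ℝ)) : Set (Fin m → ℝ) :=
  {y | ∀ x ∈ R, ∑ i, x i * y i ≤ 1}

/-- A full-dimensional lattice polytope `R ⊆ ℝ^m` is reflexive if the origin is in
its interior and all vertices (extreme points) of the dual polytope are lattice points. -/
def IsReflexive {m : ℕ} (R : Set (Fin m → ℝ)) : Prop :=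
  (0 : Fin m → ℝ) ∈ interior R ∧
    ∀ y ∈ Set.extremePoints ℝ (dualPolytope R), IsLatticePt y

theorem mem_dual_aux {d : ℕ} (FP : Set (Fin d → ℝ)) (y : Fin (d + 1) → ℝ) :
    y ∈ dualPolytope (Omega (convexHull ℝ FP) (convexHull ℝ FP)) ↔
      ∀ a ∈ FP, |∑ i, a i * y (Fin.castSucc i) + y (Fin.last d)| ≤ 1 := by
  have e1 : ∀ a : Fin d → ℝ, ∑ i, (Fin.snoc a (1 : ℝ) : Fin (d + 1) → ℝ) i * y i
      = ∑ i, a i * y (Fin.castSucc i) + y (Fin.last d) := by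
    intro a; simp [Fin.sum_univ_castSucc]
  have e2 : ∀ a : Fin d → ℝ, ∑ i, (Fin.snoc (-a) (-1 : ℝ) : Fin (d + 1) → ℝ) i * y i
      = -(∑ i, a i * y (Fin.castSucc i) + y (Fin.last d)) := by
    intro a; simp [Fin.sum_univ_castSucc]; ring
  constructor
  · intro h a ha
    have ha' := subset_convexHull ℝ FP ha
    have h1 := h _ (subset_convexHull ℝ _ (Or.inl ⟨a, ha', rfl⟩))
    have h2 := h _ (subset_convexHull ℝ _ (Or.inr ⟨a, ha', rfl⟩))
    simp only [e1, e2] at h1 h2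
    rw [abs_le]; constructor <;> linarith
  · intro h
    have hl : ∀ {n : ℕ} (v : Fin n → ℝ), IsLinearMap ℝ (fun x : Fin n → ℝ => ∑ i, x i * v i) := by
      intro n v
      constructor
      · intro a b; simp [add_mul, Finset.sum_add_distrib]
      · intro c a; simp [Finset.mul_sum, mul_assoc]
    have hs : ∀ a ∈ convexHull ℝ FP, |∑ i, a i * y (Fin.castSucc i) + y (Fin.last d)| ≤ 1 := by
      have c1 := convex_halfSpace_le (𝕜 := ℝ) (hl (fun i : Fin d => y (Fin.castSucc i)))
        (1 - y (Fin.last d))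
      have c2 := convex_halfSpace_ge (𝕜 := ℝ) (hl (fun i : Fin d => y (Fin.castSucc i)))
        (-1 - y (Fin.last d))
      intro a ha
      have := convexHull_min (s := FP) ?_ (c1.inter c2) ha
      · obtain ⟨u, v⟩ := this
        simp only [Set.mem_ofPred_eq] at u v
        rw [abs_le]; constructor <;> linarith
      · intro b hb
        have := abs_le.1 (h b hb)
        constructor <;> simp only [Set.mem_ofPred_eq] <;> linarith [this.1, this.2]
    have c := convex_halfSpace_le (𝕜 := ℝ) (hl y) 1
    intro x hx
    refine convexHull_min ?_ c hx
    rintro _ (⟨a, ha, rfl⟩ | ⟨a, ha, rfl⟩)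
    · simp only [Set.mem_ofPred_eq, e1]; exact (abs_le.1 (hs a ha)).2
    · simp only [Set.mem_ofPred_eq, e2]; linarith [(abs_le.1 (hs a ha)).1]

theorem cos_lip_aux (u v : ℝ) (h : |u + v| ≤ 1) :
    |Real.cos (Real.pi * u) + Real.cos (Real.pi * v)| ≤ 4 * (1 - |u + v|) := by
  have hL : ∀ a b : ℝ, |Real.cos a - Real.cos b| ≤ |a - b| := by
    intro a b
    have := Real.lipschitzWith_cos.dist_le_mul a b
    simpa [Real.dist_eq] using this
  have hpi := Real.pi_pos
  have hpi4 := Real.pi_le_four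
  rcases abs_cases (u + v) with ⟨e, _⟩ | ⟨e, _⟩
  · have := hL (Real.pi * u) (Real.pi - Real.pi * v)
    rw [Real.cos_pi_sub, sub_neg_eq_add] at this
    rw [e] at h ⊢
    rw [show Real.pi * u - (Real.pi - Real.pi * v) = -(Real.pi * (1 - (u + v))) by ring, abs_neg,
      abs_of_nonneg (a := Real.pi * _) (by apply mul_nonneg <;> linarith)] at this
    nlinarith
  · have := hL (Real.pi * u) (-(Real.pi * v) - Real.pi)
    rw [Real.cos_sub_pi, sub_neg_eq_add, Real.cos_neg] at this
    rw [e] at h ⊢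
    rw [show Real.pi * u - (-(Real.pi * v) - Real.pi) = (Real.pi * (1 - -(u + v))) by ring,
      abs_of_nonneg (a := Real.pi * _) (by apply mul_nonneg <;> linarith)] at this
    nlinarith

/-- The perturbation direction. -/
noncomputable def pertDir {d : ℕ} (y : Fin (d + 1) → ℝ) : Fin (d + 1) → ℝ :=
  Fin.snoc (fun i : Fin d => Real.cos (Real.pi * (y (Fin.castSucc i) + y (Fin.last d) / 2))
      - Real.cos (Real.pi * (y (Fin.last d) / 2)))
    (2 * Real.cos (Real.pi * (y (Fin.last d) / 2)))

theorem pert_aux {d : ℕ} (y : Fin (d + 1) → ℝ) (a : Fin d → ℝ) (ha : a ∈ stdSet d)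
    (h : |∑ i, a i * y (Fin.castSucc i) + y (Fin.last d)| ≤ 1) :
    |∑ i, a i * pertDir y (Fin.castSucc i) + pertDir y (Fin.last d)| ≤
      4 * (1 - |∑ i, a i * y (Fin.castSucc i) + y (Fin.last d)|) := by
  rcases ha with (ha | ⟨i, rfl⟩) | ⟨i, j, -, rfl⟩
  · obtain rfl : a = 0 := ha
    simp only [Pi.zero_apply, zero_mul, Finset.sum_const_zero, zero_add] at h ⊢
    have := cos_lip_aux (y (Fin.last d) / 2) (y (Fin.last d) / 2) (by simpa using h)
    simpa [pertDir, two_mul] using this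
  · have k : ∀ v : Fin d → ℝ, ∑ l, (Pi.single i (1 : ℝ) : Fin d → ℝ) l * v l = v i := by
      intro v; simp [Pi.single_apply]
    have k1 := k fun l => y (Fin.castSucc l)
    have k2 := k fun l => pertDir y (Fin.castSucc l)
    rw [k1] at h ⊢
    rw [k2]
    have e : y (Fin.castSucc i) + y (Fin.last d)
      = (y (Fin.castSucc i) + y (Fin.last d) / 2) + y (Fin.last d) / 2 := by ring
    rw [e] at h ⊢
    have := cos_lip_aux _ _ h
    convert this using 2
    simp [pertDir]; ring
  · have k : ∀ v : Fin d → ℝ, ∑ l, (Pi.single i (1 : ℝ) + Pi.single j 1 : Fin d → ℝ) l * v l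
        = v i + v j := by
      intro v; simp [Pi.single_apply, add_mul, Finset.sum_add_distrib]
    have k1 := k fun l => y (Fin.castSucc l)
    have k2 := k fun l => pertDir y (Fin.castSucc l)
    rw [k1] at h ⊢
    rw [k2]
    have e : y (Fin.castSucc i) + y (Fin.castSucc j) + y (Fin.last d)
      = (y (Fin.castSucc i) + y (Fin.last d) / 2)
        + (y (Fin.castSucc j) + y (Fin.last d) / 2) := by ring
    rw [e] at h ⊢
    have := cos_lip_aux _ _ h
    convert this using 2
    simp [pertDir]; ring

theorem lattice_aux {d : ℕ} (y : Fin (d + 1) → ℝ) (h : pertDir y = 0) : IsLatticePt y := by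
  have hh : ∀ x : ℝ, Real.cos (Real.pi * x) = 0 → ∃ k : ℤ, x = k + 1 / 2 := by
    intro x hx
    obtain ⟨k, hk⟩ := Real.cos_eq_zero_iff.1 hx
    refine ⟨k, ?_⟩
    have := Real.pi_pos.ne'
    apply mul_left_cancel₀ this
    rw [hk]; ring
  have h0 : Real.cos (Real.pi * (y (Fin.last d) / 2)) = 0 := by
    have := congrFun h (Fin.last d)
    simpa [pertDir] using this
  obtain ⟨k, hk⟩ := hh _ h0
  intro i
  induction i using Fin.lastCases with
  | last => exact ⟨2 * k + 1, by push_cast; linarith⟩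
  | cast i =>
    have h1 : Real.cos (Real.pi * (y (Fin.castSucc i) + y (Fin.last d) / 2)) = 0 := by
      have := congrFun h (Fin.castSucc i)
      simp only [pertDir, Fin.snoc_castSucc, Pi.zero_apply, h0, sub_zero] at this
      exact this
    obtain ⟨l, hl⟩ := hh _ h1
    exact ⟨l - k, by push_cast; linarith⟩

theorem interior_aux {d : ℕ} (P : Set (Fin d → ℝ)) (hi : (interior P).Nonempty) :
    (0 : Fin (d + 1) → ℝ) ∈ interior (Omega P P) := by
  obtain ⟨p, hp⟩ := hi
  rw [mem_interior_iff_mem_nhds] at hp ⊢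
  have c1 : ContinuousAt (fun z : Fin (d + 1) → ℝ => p + fun i => z (Fin.castSucc i)) 0 := by
    apply Continuous.continuousAt
    fun_prop
  have c2 : ContinuousAt (fun z : Fin (d + 1) → ℝ =>
      p + ((2 * z (Fin.last d) / (1 - z (Fin.last d))) • p - fun i => z (Fin.castSucc i))) 0 := by
    have : ContinuousAt (fun z : Fin (d + 1) → ℝ =>
        2 * z (Fin.last d) / (1 - z (Fin.last d))) 0 := by
      apply ContinuousAt.div
      · apply Continuous.continuousAt; fun_prop
      · apply Continuous.continuousAt; fun_prop
      · simp
    have h' : ContinuousAt (fun z : Fin (d + 1) → ℝ => fun i : Fin d => z (Fin.castSucc i)) 0 := by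
      apply Continuous.continuousAt; fun_prop
    exact continuousAt_const.add ((this.smul continuousAt_const).sub h')
  have c3 : ContinuousAt (fun z : Fin (d + 1) → ℝ => z (Fin.last d)) 0 := by
    apply Continuous.continuousAt; fun_prop
  have z0 : (fun i : Fin d => (0 : Fin (d + 1) → ℝ) (Fin.castSucc i)) = 0 := rfl
  have e1 := c1.eventually (p := fun x => x ∈ P) (by
    beta_reduce; rw [z0, add_zero]; exact hp)
  have e2 := c2.eventually (p := fun x => x ∈ P) (by
    beta_reduce; rw [z0]; simpa using hp)
  have e3 := c3.eventually (p := fun x => x ∈ Set.Ioo (-1 : ℝ) 1)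
    (Ioo_mem_nhds (by simp) (by simp))
  filter_upwards [e1, e2, e3] with z h1 h2 h3
  have m1 := subset_convexHull ℝ ((fun p => Fin.snoc p (1 : ℝ)) '' P ∪
    (fun q => Fin.snoc (-q) (-1 : ℝ)) '' P : Set (Fin (d + 1) → ℝ)) (Or.inl ⟨_, h1, rfl⟩)
  have m2 := subset_convexHull ℝ ((fun p => Fin.snoc p (1 : ℝ)) '' P ∪
    (fun q => Fin.snoc (-q) (-1 : ℝ)) '' P : Set (Fin (d + 1) → ℝ)) (Or.inr ⟨_, h2, rfl⟩)
  have m := (convex_convexHull ℝ _) m1 m2 (a := (1 + z (Fin.last d)) / 2)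
    (b := (1 - z (Fin.last d)) / 2) (by linarith [h3.1]) (by linarith [h3.2]) (by ring)
  have hne : 1 - z (Fin.last d) ≠ 0 := by linarith [h3.2]
  unfold Omega
  convert m using 1
  ext i
  induction i using Fin.lastCases with
  | last => simp; ring
  | cast i => simp; field_simp; ring

theorem stmt1 (d : ℕ) (hd : 1 ≤ d) (P : Set (Fin d → ℝ))
    (FP : Set (Fin d → ℝ)) (hFP : FP ⊆ stdSet d)
    (hP : P = convexHull ℝ FP)
    (hPdim : Module.finrank ℝ (affineSpan ℝ P).direction = d) :
    (0 : Fin (d + 1) → ℝ) ∈ interior (Omega P P) ∧ IsReflexive (Omega P P) := by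
  have hint : (0 : Fin (d + 1) → ℝ) ∈ interior (Omega P P) := by
    apply interior_aux
    have hc : Convex ℝ P := hP ▸ convex_convexHull ℝ FP
    rw [hc.interior_nonempty_iff_affineSpan_eq_top]
    have hne : P.Nonempty := by
      rw [Set.nonempty_iff_ne_empty]
      rintro rfl
      rw [AffineSubspace.span_empty, AffineSubspace.direction_bot, finrank_bot] at hPdim
      omega
    rw [← AffineSubspace.direction_eq_top_iff_of_nonempty ((affineSpan_nonempty ℝ).2 hne)]
    apply Submodule.eq_top_of_finrank_eq
    rw [hPdim]; simp
  refine ⟨hint, hint, ?_⟩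
  intro y hy
  apply lattice_aux
  subst hP
  obtain ⟨hyd, hext⟩ := mem_extremePoints.1 hy
  rw [mem_dual_aux] at hyd
  have key : ∀ c : ℝ, |c| ≤ 1 / 4 →
      y + c • pertDir y ∈ dualPolytope (Omega (convexHull ℝ FP) (convexHull ℝ FP)) := by
    intro c hc
    rw [mem_dual_aux]
    intro a ha
    have h1 := pert_aux y a (hFP ha) (hyd a ha)
    have e : ∑ i, a i * (y + c • pertDir y) (Fin.castSucc i) + (y + c • pertDir y) (Fin.last d)
        = (∑ i, a i * y (Fin.castSucc i) + y (Fin.last d)) +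
          c * (∑ i, a i * pertDir y (Fin.castSucc i) + pertDir y (Fin.last d)) := by
      simp only [Pi.add_apply, Pi.smul_apply, smul_eq_mul, mul_add, Finset.sum_add_distrib,
        Finset.mul_sum]
      have : ∀ i, a i * (c * pertDir y (Fin.castSucc i)) = c * (a i * pertDir y (Fin.castSucc i)) :=
        fun i => by ring
      simp only [this]; ring
    rw [e]
    refine (abs_add_le _ _).trans ?_
    rw [abs_mul]
    have := mul_le_mul hc h1 (abs_nonneg _) (by norm_num)
    linarith
  have hm := hext _ (key (1 / 4) (by norm_num [abs_of_pos])) _ (key (-(1 / 4)) (by norm_num [abs_of_pos]))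
    ⟨1 / 2, 1 / 2, by norm_num, by norm_num, by norm_num, by module⟩
  have h2 := hm.1
  rw [add_eq_left] at h2
  exact (smul_eq_zero.1 h2).resolve_left (by norm_num)
end

section
/- Let A = (a_{ij}) ∈ ℤ^{d×d} be a matrix with all entries in {0,1,2} such that every row satisfies a_{id} = 1 and a_{i1} + ⋯ + a_{i,d−1} ≤ 2. If det(A) ≠ 0, then there exist matrices U, V ∈ ℤ^{d×d} with det(U) = ±1 and det(V) = ±1 and an integer 0 ≤ s ≤ d such that U A V is the diagonal matrix whose first s diagonal entries equal 1 and whose remaining d − s diagonal entries equal 2. -/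
/-- 2 e_i lies in the row span -/
lemma two_mem {n : Type*} [Fintype n] [DecidableEq n] (B : Matrix n n ℤ)
    (hB : ∀ r, ∃ a b, B r = Pi.single a 1 + Pi.single b 1) (hdet : B.det ≠ 0) (i : n) :
    ((2 : ℤ) • Pi.single i 1 : n → ℤ) ∈ Submodule.span ℤ (Set.range B) := by
  classical
  set L := Submodule.span ℤ (Set.range B) with hL
  by_contra hcon
  set P : n → Prop := fun j => (Pi.single i 1 - Pi.single j 1 : n → ℤ) ∈ L with hP
  set N : n → Prop := fun j => (Pi.single i 1 + Pi.single j 1 : n → ℤ) ∈ L with hN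
  have hdis : ∀ j, P j → N j → False := by
    intro j h1 h2
    apply hcon
    have := L.add_mem h1 h2
    convert this using 1
    module
  have hi : P i := by simp [hP]
  let φ : n → ℤ := fun j => if P j then 1 else if N j then -1 else 0
  have hφ : φ ≠ 0 := by
    intro h
    have := congrFun h i
    simp [φ, hi] at this
  apply hdet
  apply Matrix.exists_mulVec_eq_zero_iff.mp
  refine ⟨φ, hφ, ?_⟩
  funext r
  obtain ⟨a, b, hab⟩ := hB r
  have hr : (Pi.single a 1 + Pi.single b 1 : n → ℤ) ∈ L := by
    rw [← hab]; exact Submodule.subset_span ⟨r, rfl⟩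
  have e1 : ∀ a b, (Pi.single a 1 + Pi.single b 1 : n → ℤ) ∈ L → P a → N b := by
    intro a b hr h
    have := L.add_mem h hr
    simp only [hN]
    convert this using 1
    module
  have e2 : ∀ a b, (Pi.single a 1 + Pi.single b 1 : n → ℤ) ∈ L → N a → P b := by
    intro a b hr h
    have := L.sub_mem h hr
    simp only [hP]
    convert this using 1
    module
  have hr' : (Pi.single b 1 + Pi.single a 1 : n → ℤ) ∈ L := by rwa [add_comm]
  have : B.mulVec φ r = φ a + φ b := by
    change dotProduct (B r) φ = _
    rw [hab, add_dotProduct]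
    simp
  rw [this]
  have := e1 a b hr
  have := e1 b a hr'
  have := e2 a b hr
  have := e2 b a hr'
  have := hdis a
  have := hdis b
  simp only [φ, Pi.zero_apply]
  clear_value P N
  split_ifs <;> first | rfl | (exfalso; tauto)

lemma exists_ab {n : Type*} [Fintype n] [DecidableEq n] (v : n → ℤ) (h0 : ∀ j, 0 ≤ v j)
    (hs : ∑ j, v j = 2) : ∃ a b, v = Pi.single a 1 + Pi.single b 1 := by
  have key : ∀ (w : n → ℤ), (∀ j, 0 ≤ w j) → 0 < ∑ j, w j →
      ∃ a, ∀ j, 0 ≤ (w - Pi.single a 1 : n → ℤ) j := by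
    intro w hw hpos
    obtain ⟨a, -, ha⟩ := Finset.exists_lt_of_sum_lt (s := Finset.univ) (f := fun _ : n => (0:ℤ)) (g := w) (by simpa using hpos)
    refine ⟨a, fun j => ?_⟩
    by_cases h : j = a
    · subst h; simp; omega
    · simp [h, hw j]
  obtain ⟨a, ha⟩ := key v h0 (by omega)
  have s1 : ∑ j, (v - Pi.single a 1 : n → ℤ) j = 1 := by simp [Finset.sum_sub_distrib, hs]
  obtain ⟨b, hb⟩ := key _ ha (by omega)
  have s2 : ∑ j, (v - Pi.single a 1 - Pi.single b 1 : n → ℤ) j = 0 := by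
    simp only [Pi.sub_apply (v - Pi.single a 1), Finset.sum_sub_distrib, s1]; simp
  refine ⟨a, b, ?_⟩
  have := (Finset.sum_eq_zero_iff_of_nonneg (fun j _ => hb j)).mp s2
  funext j
  have := this j (Finset.mem_univ _)
  simp only [Pi.sub_apply, Pi.add_apply] at *
  omega

lemma exists_left {n : Type*} [Fintype n] [DecidableEq n] (l : n) (A : Matrix n n ℤ)
    (h0 : ∀ i j, 0 ≤ A i j) (hlast : ∀ i, A i l = 1)
    (hsum : ∀ i, ∑ j ∈ Finset.univ.filter (fun j => j ≠ l), A i j ≤ 2)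
    (hdet : A.det ≠ 0) : ∃ W : Matrix n n ℤ, W * A = 2 := by
  classical
  let T : Matrix n n ℤ := (1 : Matrix n n ℤ).updateCol l (fun j => if j = l then 2 else -1)
  have hT : T.det = 2 := by
    have : T = ((1 : Matrix n n ℤ).updateCol l (fun j => if j = l then 2 else -1)) := rfl
    rw [this, ← Matrix.cramer_apply]
    simp [Matrix.cramer_one]
  have hBl : ∀ r, (A * T) r l = 2 - ∑ j ∈ Finset.univ.filter (fun j => j ≠ l), A r j := by
    intro r
    have : ∑ j ∈ Finset.univ.filter (fun j => j ≠ l), A r j = ∑ j, A r j - A r l := by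
      rw [Finset.filter_ne', ← Finset.sum_erase_add _ _ (Finset.mem_univ l)]; ring
    rw [this, hlast]
    have h2 : ∀ j, A r j * T j l = -A r j + (if j = l then 3 else 0) := by
      intro j
      by_cases h : j = l
      · subst h; simp [T, hlast]
      · simp [T, h]
    simp only [Matrix.mul_apply, h2, Finset.sum_add_distrib]
    simp; ring
  have hBj : ∀ r j, j ≠ l → (A * T) r j = A r j := by
    intro r j h
    simp [Matrix.mul_apply, T, Matrix.updateCol_ne h, Matrix.one_apply]
  have hB : ∀ r, ∃ a b, (A * T) r = Pi.single a 1 + Pi.single b 1 := by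
    intro r
    apply exists_ab
    · intro j
      by_cases h : j = l
      · subst h; rw [hBl]; have := hsum r; omega
      · rw [hBj r j h]; exact h0 r j
    · rw [← Finset.sum_erase_add _ _ (Finset.mem_univ l), hBl, Finset.filter_ne',
        Finset.sum_congr rfl (fun j hj => hBj r j (Finset.ne_of_mem_erase hj))]
      ring
  have hBd : (A * T).det ≠ 0 := by rw [Matrix.det_mul, hT]; simpa using hdet
  have hC : ∀ i, ∃ c : n → ℤ, Matrix.vecMul c (A * T) = (2 : ℤ) • Pi.single i 1 := by
    intro i
    have := two_mem (A * T) hB hBd i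
    obtain ⟨c, hc⟩ := (Submodule.mem_span_range_iff_exists_fun ℤ).mp this
    refine ⟨c, ?_⟩
    rw [← hc, Matrix.vecMul_eq_sum]
  choose C hC using hC
  refine ⟨T * Matrix.of C, ?_⟩
  have hCB : Matrix.of C * (A * T) = 2 := by
    ext i j
    have := congrFun (hC i) j
    have e : (Matrix.of C * (A * T)) i j = Matrix.vecMul (C i) (A * T) j := rfl
    rw [e, this]
    simp [Pi.single_apply, Matrix.ofNat_apply, eq_comm]
  have hz : (T * Matrix.of C * A) * T = 2 * T := by
    rw [Matrix.mul_assoc, Matrix.mul_assoc, hCB, ← Nat.cast_ofNat, ← Nat.cast_comm]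
  have hreg : (T * Matrix.of C * A) * (T * T.adjugate) = 2 * (T * T.adjugate) := by
    rw [← Matrix.mul_assoc, hz, Matrix.mul_assoc]
  rw [Matrix.mul_adjugate, hT, Matrix.mul_smul, Matrix.mul_smul, mul_one, mul_one] at hreg
  ext i j
  have := congrFun (congrFun hreg i) j
  simp only [Matrix.smul_apply, smul_eq_mul] at this
  omega

lemma exists_diag {n : Type*} [Fintype n] [DecidableEq n] (A W : Matrix n n ℤ)
    (hdet : A.det ≠ 0) (hW : W * A = 2) :
    ∃ (U V : Matrix n n ℤ) (a : n → ℤ), IsUnit U.det ∧ IsUnit V.det ∧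
      (∀ i, a i ∣ 2) ∧ U * A * V = Matrix.diagonal a := by
  classical
  have hinj : Function.Injective A.mulVecLin := by
    intro x y h
    have h' : A.mulVec x = A.mulVec y := h
    have := congrArg W.mulVec h'
    rw [Matrix.mulVec_mulVec, Matrix.mulVec_mulVec, hW] at this
    funext i
    have := congrFun this i
    simpa using this
  let e := LinearEquiv.ofInjective A.mulVecLin hinj
  obtain ⟨b, a, c, hc⟩ := Submodule.exists_smith_normal_form_of_rank_eq
    (N := LinearMap.range A.mulVecLin) (Pi.basisFun ℤ n) e.finrank_eq.symm
  let c' := c.map e.symm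
  have hc' : ∀ i, A.mulVec (c' i) = a i • b i := by
    intro i
    rw [← hc]
    change ((e (c' i) : LinearMap.range A.mulVecLin) : n → ℤ) = _
    simp [c']
  let P := (Pi.basisFun ℤ n).toMatrix b
  let Q := b.toMatrix (Pi.basisFun ℤ n)
  let V := (Pi.basisFun ℤ n).toMatrix c'
  have hQP : Q * P = 1 := Module.Basis.toMatrix_mul_toMatrix_flip _ _
  have hV : V * c'.toMatrix (Pi.basisFun ℤ n) = 1 := Module.Basis.toMatrix_mul_toMatrix_flip _ _
  have hAV : A * V = P * Matrix.diagonal a := by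
    ext i j
    have := congrFun (hc' j) i
    rw [Matrix.mul_diagonal]
    simp only [Pi.smul_apply, smul_eq_mul] at this
    simp only [P, V, Module.Basis.toMatrix_apply, Pi.basisFun_repr, Matrix.mul_apply]
    rw [mul_comm, ← this]
    rfl
  have hD : Q * A * V = Matrix.diagonal a := by
    rw [Matrix.mul_assoc, hAV, ← Matrix.mul_assoc, hQP, Matrix.one_mul]
  have hV' : c'.toMatrix (Pi.basisFun ℤ n) * V = 1 :=
    Module.Basis.toMatrix_mul_toMatrix_flip _ _
  refine ⟨Q, V, a, Matrix.isUnit_det_of_right_inverse hQP, Matrix.isUnit_det_of_right_inverse hV,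
    ?_, hD⟩
  intro i
  have h2 : (c'.toMatrix (Pi.basisFun ℤ n) * W * P) * Matrix.diagonal a = 2 := by
    rw [Matrix.mul_assoc, ← hAV, Matrix.mul_assoc, ← Matrix.mul_assoc W, hW,
      ← Nat.cast_ofNat, Nat.cast_comm, ← Matrix.mul_assoc, hV', Matrix.one_mul]
  have := congrFun (congrFun h2 i) i
  rw [Matrix.mul_diagonal] at this
  have h3 : (2 : Matrix n n ℤ) i i = 2 := by rw [Matrix.ofNat_apply]; simp
  exact ⟨_, by rw [mul_comm]; exact (this.trans h3).symm⟩

theorem stmt2 (d : ℕ) (hd : 0 < d) (A : Matrix (Fin d) (Fin d) ℤ)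
    (hent : ∀ i j, A i j = 0 ∨ A i j = 1 ∨ A i j = 2)
    (hlast : ∀ i, A i ⟨d - 1, by omega⟩ = 1)
    (hsum : ∀ i,
      ∑ j ∈ Finset.univ.filter (fun j => j ≠ (⟨d - 1, by omega⟩ : Fin d)), A i j ≤ 2)
    (hdet : A.det ≠ 0) :
    ∃ (U V : Matrix (Fin d) (Fin d) ℤ) (s : ℕ), s ≤ d ∧
      (U.det = 1 ∨ U.det = -1) ∧ (V.det = 1 ∨ V.det = -1) ∧
      U * A * V = Matrix.diagonal (fun i : Fin d => if (i : ℕ) < s then 1 else 2) := by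
  classical
  obtain ⟨W, hW⟩ := exists_left _ A
    (fun i j => by rcases hent i j with h | h | h <;> omega) hlast hsum hdet
  obtain ⟨U, V, a, hU, hV, ha, hD⟩ := exists_diag A W hdet hW
  have ha' : ∀ i, a i = 1 ∨ a i = -1 ∨ a i = 2 ∨ a i = -2 := by
    intro i
    have h1 := Int.le_of_dvd (by norm_num) (ha i)
    have h2 := Int.le_of_dvd (by norm_num) ((neg_dvd).mpr (ha i))
    have h3 : a i ≠ 0 := by
      intro h
      have := ha i
      rw [h] at this
      omega
    omega
  let s := Fintype.card {i // |a i| = 1}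
  have hs : s ≤ d := by simpa using Fintype.card_subtype_le (fun i : Fin d => |a i| = 1)
  have hcard : Fintype.card {i : Fin d // (i : ℕ) < s} = Fintype.card {i // |a i| = 1} := by
    rw [Fintype.card_subtype, Fin.card_filter_val_lt]
    exact min_eq_right hs
  let σ := (Fintype.equivOfCardEq hcard).extendSubtype
  have h1 : ∀ i : Fin d, (i : ℕ) < s → |a (σ i)| = 1 := fun i hi =>
    (Fintype.equivOfCardEq hcard).extendSubtype_mem i hi
  have h2 : ∀ i : Fin d, ¬ (i : ℕ) < s → ¬ |a (σ i)| = 1 := fun i hi =>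
    (Fintype.equivOfCardEq hcard).extendSubtype_not_mem i hi
  let S : Matrix (Fin d) (Fin d) ℤ := Matrix.diagonal (fun i => SignType.sign (a i))
  have hSu : IsUnit S.det := by
    rw [Matrix.det_diagonal, IsUnit.prod_univ_iff]
    intro i
    rcases ha' i with h | h | h | h <;> simp [h]
  have hSU : (S * U) * A * V = Matrix.diagonal (fun i => |a i|) := by
    rw [Matrix.mul_assoc, Matrix.mul_assoc, ← Matrix.mul_assoc U, hD, Matrix.diagonal_mul_diagonal]
    simp
  refine ⟨(S * U).submatrix σ id, V.submatrix id σ, s, hs, ?_, ?_, ?_⟩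
  · rw [← Int.isUnit_iff, Matrix.det_permute, Matrix.det_mul]
    exact (Units.isUnit _ |>.map (Int.castRingHom ℤ)).mul (hSu.mul hU)
  · rw [← Int.isUnit_iff, Matrix.det_permute']
    exact (Units.isUnit _ |>.map (Int.castRingHom ℤ)).mul hV
  · have : (S * U).submatrix σ id * A * V.submatrix id σ = ((S * U) * A * V).submatrix σ σ := by
      ext i j; rfl
    rw [this, hSU, Matrix.submatrix_diagonal_equiv]
    congr 1
    funext i
    simp only [Function.comp]
    split_ifs with h
    · exact h1 i h
    · have := h2 i h
      rcases ha' (σ i) with h | h | h | h <;> simp_all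
end

section
/- Let G be a connected finite simple graph on the vertex set [n] = {1,…,n}. Then the edge polytope P_G has the integer decomposition property (is normal) if and only if for any two odd cycles C and C′ of G having no common vertex, there exists an edge of G joining a vertex of C with a vertex of C′. -/
/-- The edge polytope of a finite simple graph `G` on the vertex set `Fin n`:
the convex hull of the vectors `e_i + e_j` for the edges `{i,j}` of `G`. -/
def edgePolytope {n : ℕ} (G : SimpleGraph (Fin n)) : Set (Fin n → ℝ) :=
  convexHull ℝ {x | ∃ i j : Fin n, G.Adj i j ∧ x = Pi.single i 1 + Pi.single j 1}

/-- A lattice polytope `P ⊆ ℝ^m` has the integer decomposition property (is normal)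
if every lattice point of `N·P` is a sum of `N` lattice points of `P`. -/
def HasIDP {m : ℕ} (P : Set (Fin m → ℝ)) : Prop :=
  ∀ N : ℕ, 1 ≤ N → ∀ x : Fin m → ℝ,
    x ∈ (fun y => (N : ℝ) • y) '' P → IsLatticePt x →
      ∃ f : Fin N → (Fin m → ℝ),
        (∀ k, f k ∈ P ∧ IsLatticePt (f k)) ∧ x = ∑ k, f k


open Finset in
lemma ep_lin {n : ℕ} (G : SimpleGraph (Fin n)) (w : Fin n → ℝ) (r : ℝ)
    (h : ∀ i j, G.Adj i j → r ≤ w i + w j) (y : Fin n → ℝ) (hy : y ∈ edgePolytope G) :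
    r ≤ ∑ v, w v * y v := by
  have hL : IsLinearMap ℝ (fun y : Fin n → ℝ => ∑ v, w v * y v) := by
    constructor
    · intro x y
      simp [mul_add, Finset.sum_add_distrib]
    · intro c x
      simp only [Pi.smul_apply, smul_eq_mul, Finset.mul_sum]
      exact Finset.sum_congr rfl fun _ _ => by ring
  have := convexHull_min (s := {x : Fin n → ℝ | ∃ i j : Fin n, G.Adj i j ∧ x = Pi.single i 1 + Pi.single j 1})
    (t := {y | r ≤ ∑ v, w v * y v}) ?_ (convex_halfSpace_ge hL r)
  · exact this hy
  · rintro x ⟨i, j, hij, rfl⟩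
    have := h i j hij
    simpa [mul_add, Finset.sum_add_distrib, Pi.single_apply] using this

lemma ep_nonneg {n : ℕ} (G : SimpleGraph (Fin n)) (y : Fin n → ℝ) (hy : y ∈ edgePolytope G)
    (i : Fin n) : 0 ≤ y i := by
  have := ep_lin G (Pi.single i 1) 0 (fun a b _ => by
    simp only [Pi.single_apply]; split_ifs <;> norm_num) y hy
  simpa [Pi.single_apply] using this

lemma ep_sum {n : ℕ} (G : SimpleGraph (Fin n)) (y : Fin n → ℝ) (hy : y ∈ edgePolytope G) :
    ∑ v, y v = 2 := by
  have h1 := ep_lin G (fun _ => 1) 2 (fun a b _ => by norm_num) y hy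
  have h2 := ep_lin G (fun _ => -1) (-2) (fun a b _ => by norm_num) y hy
  simp at h1 h2
  linarith

open Classical in
lemma ep_hall {n : ℕ} (G : SimpleGraph (Fin n)) (y : Fin n → ℝ) (hy : y ∈ edgePolytope G)
    (A : Finset (Fin n)) :
    ∑ v ∈ A, y v ≤ ∑ v ∈ Finset.univ.filter (fun v => ∃ a ∈ A, G.Adj a v), y v := by
  have := ep_lin G (fun v => (if ∃ a ∈ A, G.Adj a v then 1 else 0) - (if v ∈ A then 1 else 0)) 0
    (fun i j hij => by
      have h1 : i ∈ A → ∃ a ∈ A, G.Adj a j := fun h => ⟨i, h, hij⟩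
      have h2 : j ∈ A → ∃ a ∈ A, G.Adj a i := fun h => ⟨j, h, hij.symm⟩
      by_cases hi : i ∈ A <;> by_cases hj : j ∈ A
      · simp only [hi, hj, h1 hi, h2 hj, if_true]; norm_num
      · simp only [hi, hj, h1 hi, if_true, if_false]; split_ifs <;> norm_num
      · simp only [hi, hj, h2 hj, if_true, if_false]; split_ifs <;> norm_num
      · simp only [hi, hj, if_false]; split_ifs <;> norm_num) y hy
  simp only [sub_mul, Finset.sum_sub_distrib, ite_mul, one_mul, zero_mul] at this
  rw [← Finset.sum_filter, ← Finset.sum_filter] at this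
  simp only [Finset.filter_univ_mem] at this
  linarith

/-- multisets that are sums of edges -/
inductive EdgeDec {V : Type} (G : SimpleGraph V) : Multiset V → Prop
  | zero : EdgeDec G 0
  | cons (a b : V) (m : Multiset V) : G.Adj a b → EdgeDec G m → EdgeDec G (a ::ₘ b ::ₘ m)

lemma EdgeDec.add {V : Type} {G : SimpleGraph V} {m m' : Multiset V} (h : EdgeDec G m)
    (h' : EdgeDec G m') : EdgeDec G (m + m') := by
  induction h with
  | zero => simpa using h'
  | cons a b m hab _ ih =>
    rw [Multiset.cons_add, Multiset.cons_add]
    exact EdgeDec.cons a b _ hab ih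

lemma EdgeDec.exists_fun {n : ℕ} {G : SimpleGraph (Fin n)} {m : Multiset (Fin n)}
    (h : EdgeDec G m) : ∃ k, m.card = 2 * k ∧ ∃ f : Fin k → (Fin n → ℝ),
      (∀ i, ∃ a b, G.Adj a b ∧ f i = Pi.single a 1 + Pi.single b 1) ∧
      ∀ v, ((m.count v : ℕ) : ℝ) = ∑ i, f i v := by
  induction h with
  | zero => exact ⟨0, by simp, fun i => i.elim0, fun i => i.elim0, by simp⟩
  | cons a b m hab _ ih =>
    obtain ⟨k, hk, f, hf, hs⟩ := ih
    refine ⟨k + 1, by simp [hk]; ring, Fin.cons (Pi.single a 1 + Pi.single b 1) f, ?_, ?_⟩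
    · intro i
      refine Fin.cases ?_ ?_ i
      · exact ⟨a, b, hab, by simp⟩
      · intro j; simpa using hf j
    · intro v
      simp only [Fin.sum_univ_succ, Fin.cons_zero, Fin.cons_succ, ← hs, Multiset.count_cons,
        Pi.add_apply, Pi.single_apply]
      push_cast
      ring

lemma edgeDec_iterate {V α : Type} (G : SimpleGraph V) (π : α → V) (σ : α → α)
    (hσ : ∀ a, G.Adj (π a) (π (σ a))) (m : ℕ) : ∀ u,
    EdgeDec G (((List.iterate σ u (2 * m)).map π : List V) : Multiset V) := by
  induction m with
  | zero => intro u; exact EdgeDec.zero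
  | succ m ih =>
    intro u
    have : 2 * (m + 1) = 2 * m + 1 + 1 := by ring
    rw [this]
    simp only [List.iterate, List.map_cons, ← Multiset.cons_coe]
    exact EdgeDec.cons _ _ _ (hσ u) (ih _)

lemma edgeDec_iterate_pair {V α : Type} (G : SimpleGraph V) (π : α → V) (σ : α → α)
    (hσ : ∀ a, G.Adj (π a) (π (σ a))) (m m' : ℕ) (u w : α) (huw : G.Adj (π u) (π w)) :
    EdgeDec G ((((List.iterate σ u (2 * m + 1)).map π : List V) : Multiset V) +
      (((List.iterate σ w (2 * m' + 1)).map π : List V) : Multiset V)) := by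
  simp only [List.iterate, List.map_cons, ← Multiset.cons_coe]
  rw [Multiset.cons_add, Multiset.add_cons]
  exact EdgeDec.cons _ _ _ huw ((edgeDec_iterate G π σ hσ m _).add (edgeDec_iterate G π σ hσ m' _))

lemma edgeDec_sum {V ι : Type} [DecidableEq ι] (G : SimpleGraph V) (F : Finset ι) (μ : ι → Multiset V)
    (hev : ∀ c ∈ F, Even (μ c).card → EdgeDec G (μ c))
    (hodd : ∀ c ∈ F, ∀ d ∈ F, c ≠ d → Odd (μ c).card → Odd (μ d).card → EdgeDec G (μ c + μ d)) :
    (Even (∑ c ∈ F, μ c).card ∧ EdgeDec G (∑ c ∈ F, μ c)) ∨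
    (Odd (∑ c ∈ F, μ c).card ∧ ∃ d ∈ F, Odd (μ d).card ∧
      ∃ m, EdgeDec G m ∧ ∑ c ∈ F, μ c = μ d + m) := by
  induction F using Finset.induction_on with
  | empty => left; exact ⟨by simp, by simpa using EdgeDec.zero⟩
  | insert a F ha ih =>
    rw [Finset.sum_insert ha, Multiset.card_add]
    have hh := ih (fun c hc => hev c (Finset.mem_insert_of_mem hc))
      (fun c hc d hd => hodd c (Finset.mem_insert_of_mem hc) d (Finset.mem_insert_of_mem hd))
    rcases Nat.even_or_odd (μ a).card with hpa | hpa
    · have hD := hev a (Finset.mem_insert_self _ _) hpa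
      rcases hh with ⟨h1, h2⟩ | ⟨h1, d, hd, hdo, m, hm, hs⟩
      · left; exact ⟨hpa.add h1, hD.add h2⟩
      · right
        refine ⟨hpa.add_odd h1, d, Finset.mem_insert_of_mem hd, hdo, μ a + m, hD.add hm, ?_⟩
        rw [hs]; exact add_left_comm _ _ _
    · rcases hh with ⟨h1, h2⟩ | ⟨h1, d, hd, hdo, m, hm, hs⟩
      · right
        exact ⟨hpa.add_even h1, a, Finset.mem_insert_self _ _, hpa, _, h2, rfl⟩
      · left
        refine ⟨hpa.add_odd h1, ?_⟩
        rw [hs, ← add_assoc]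
        exact (hodd a (Finset.mem_insert_self _ _) d (Finset.mem_insert_of_mem hd)
          (fun h => ha (h ▸ hd)) hpa hdo).add hm

open Classical in
lemma bypass_parity {V : Type} (G : SimpleGraph V) {u v : V} (p : G.Walk u v) :
    (∃ (w : V) (c : G.Walk w w), c.IsCycle ∧ Odd c.length ∧ ∀ x ∈ c.support, x ∈ p.support) ∨
    (Even p.length ↔ Even p.bypass.length) := by
  induction p with
  | nil => right; simp [SimpleGraph.Walk.bypass]
  | @cons u w v h p ih =>
    rcases ih with ⟨z, c, hc, ho, hs⟩ | ih
    · left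
      exact ⟨z, c, hc, ho, fun x hx => by simp [hs x hx]⟩
    · by_cases hu : u ∈ p.bypass.support
      · have hlen : (p.bypass.takeUntil u hu).length + (p.bypass.dropUntil u hu).length =
            p.bypass.length := by
          rw [← SimpleGraph.Walk.length_append, SimpleGraph.Walk.take_spec]
        have hpath : (p.bypass.takeUntil u hu).IsPath := (p.bypass_isPath).takeUntil hu
        have hb : (SimpleGraph.Walk.cons h p).bypass = p.bypass.dropUntil u hu := by
          simp [SimpleGraph.Walk.bypass, hu]
        rcases Nat.even_or_odd (p.bypass.takeUntil u hu).length with he | ho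
        · left
          refine ⟨u, SimpleGraph.Walk.cons h (p.bypass.takeUntil u hu), ?_, ?_, ?_⟩
          · rw [SimpleGraph.Walk.cons_isCycle_iff]
            refine ⟨hpath, ?_⟩
            intro hmem
            rw [Sym2.eq_swap] at hmem
            rw [hpath.length_eq_one_of_mem_edges hmem] at he
            exact absurd he (by decide)
          · rw [SimpleGraph.Walk.length_cons]; exact he.add_one
          · intro x hx
            rw [SimpleGraph.Walk.support_cons, List.mem_cons] at hx ⊢
            rcases hx with hx | hx
            · exact Or.inl hx
            · exact Or.inr (p.support_bypass_subset_support
                (p.bypass.support_takeUntil_subset_support hu hx))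
        · right
          rw [hb, SimpleGraph.Walk.length_cons]
          grind
      · right
        have hb : (SimpleGraph.Walk.cons h p).bypass = SimpleGraph.Walk.cons h p.bypass := by
          simp [SimpleGraph.Walk.bypass, hu]
        rw [hb, SimpleGraph.Walk.length_cons, SimpleGraph.Walk.length_cons]
        grind

lemma exists_odd_cycle {V : Type} (G : SimpleGraph V) {u : V} (p : G.Walk u u) (hp : Odd p.length) :
    ∃ (w : V) (c : G.Walk w w), c.IsCycle ∧ Odd c.length ∧ ∀ x ∈ c.support, x ∈ p.support := by
  classical
  rcases bypass_parity G p with h | h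
  · exact h
  · exfalso
    have h2 : p.bypass.Nil := SimpleGraph.Walk.isPath_iff_nil.1 p.bypass_isPath
    have h3 : p.bypass.length = 0 := SimpleGraph.Walk.length_eq_zero_iff.2 h2
    rw [h3] at h
    rw [← Nat.not_even_iff_odd, h] at hp
    exact hp (by decide)

lemma exists_walk {V α : Type} (G : SimpleGraph V) (π : α → V) (σ : α → α)
    (hσ : ∀ a, G.Adj (π a) (π (σ a))) (k : ℕ) : ∀ u, ∃ p : G.Walk (π u) (π (σ^[k] u)),
      p.length = k ∧ ∀ x ∈ p.support, ∃ j, x = π (σ^[j] u) := by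
  induction k with
  | zero => intro u; exact ⟨SimpleGraph.Walk.nil, rfl, fun x hx => ⟨0, by simpa using hx⟩⟩
  | succ k ih =>
    intro u
    obtain ⟨p, hp, hs⟩ := ih (σ u)
    refine ⟨SimpleGraph.Walk.cons (hσ u) p, by simp [hp], ?_⟩
    intro x hx
    have hx := List.mem_cons.1 hx
    rcases hx with hx | hx
    · exact ⟨0, hx⟩
    · obtain ⟨j, hj⟩ := hs x hx
      exact ⟨j + 1, hj⟩

lemma cyc_toList {α : Type} [Fintype α] [DecidableEq α] (σ c : Equiv.Perm α)
    (hc : c ∈ σ.cycleFactorsFinset) (u : α) (hu : u ∈ c.support) :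
    c.support.val = (List.iterate σ u c.support.card : Multiset α) ∧ σ^[c.support.card] u = u := by
  have h := (Equiv.Perm.eq_cycleOf_of_mem_cycleFactorsFinset_iff σ c hc u).2 hu
  have hus : u ∈ σ.support := Equiv.Perm.mem_cycleFactorsFinset_support_le hc hu
  have hcyc : c.IsCycle := (Equiv.Perm.mem_cycleFactorsFinset_iff.1 hc).1
  constructor
  · have h1 : List.iterate σ u c.support.card = σ.toList u := by rw [h]; rfl
    rw [h1]
    refine (Multiset.Nodup.ext c.support.nodup (Multiset.coe_nodup.2 (Equiv.Perm.nodup_toList σ u))).2 ?_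
    intro a
    rw [Multiset.mem_coe, Equiv.Perm.mem_toList_iff, Finset.mem_val, h,
      Equiv.Perm.mem_support_cycleOf_iff]
  · have h1 : (c ^ c.support.card) u = u := by
      rw [← hcyc.orderOf, pow_orderOf_eq_one]; rfl
    rw [← Equiv.Perm.coe_pow]
    have h2 := Equiv.Perm.cycleOf_pow_apply_self σ u c.support.card
    rw [← h] at h2
    rw [← h2, h1]

lemma edgeDec_perm {V α : Type} [Fintype α] [DecidableEq α] (G : SimpleGraph V) (π : α → V)
    (σ : Equiv.Perm α) (hσ : ∀ a, G.Adj (π a) (π (σ a)))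
    (hG : ∀ (v w : V) (c : G.Walk v v) (c' : G.Walk w w),
        c.IsCycle → c'.IsCycle → Odd c.length → Odd c'.length →
        (∀ x ∈ c.support, x ∉ c'.support) →
        ∃ x ∈ c.support, ∃ y ∈ c'.support, G.Adj x y)
    (hcard : Even (Fintype.card α)) :
    EdgeDec G ((Finset.univ : Finset α).val.map π) := by
  have hsum : ∑ c ∈ σ.cycleFactorsFinset, c.support.val = (Finset.univ : Finset α).val := by
    ext a
    rw [Multiset.count_sum']
    have ha : a ∈ σ.support := by
      rw [Equiv.Perm.mem_support]
      intro h
      have := hσ a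
      rw [h] at this
      exact G.loopless.irrefl _ this
    rw [Finset.sum_eq_single (σ.cycleOf a)]
    · rw [Multiset.count_eq_one_of_mem (Finset.nodup _), Multiset.count_eq_one_of_mem (Finset.nodup _)]
      · simp
      · rw [Finset.mem_val, Equiv.Perm.mem_support_cycleOf_iff]
        exact ⟨Equiv.Perm.SameCycle.refl _ _, ha⟩
    · intro c hc hne
      rw [Multiset.count_eq_zero]
      intro hm
      exact hne ((Equiv.Perm.eq_cycleOf_of_mem_cycleFactorsFinset_iff σ c hc a).2 hm)
    · intro h
      exact absurd (Equiv.Perm.cycleOf_mem_cycleFactorsFinset_iff.2 ha) h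
  have hsum' : ∑ c ∈ σ.cycleFactorsFinset, c.support.val.map π =
      (Finset.univ : Finset α).val.map π := by
    rw [← hsum]
    exact (map_sum (Multiset.mapAddMonoidHom π) _ _).symm
  have hne : ∀ c ∈ σ.cycleFactorsFinset, ∃ u, u ∈ c.support := fun c hc =>
    (Equiv.Perm.mem_cycleFactorsFinset_iff.1 hc).1.nonempty_support
  have hit : ∀ c ∈ σ.cycleFactorsFinset, ∀ u ∈ c.support, ∀ j, σ^[j] u ∈ c.support := by
    intro c hc u hu j
    induction j with
    | zero => exact hu
    | succ j ih =>
      rw [Function.iterate_succ_apply']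
      exact (Equiv.Perm.mem_cycleFactorsFinset_support hc _).2 ih
  have hocyc : ∀ c ∈ σ.cycleFactorsFinset, Odd c.support.card → ∃ (w : V) (p : G.Walk w w),
      p.IsCycle ∧ Odd p.length ∧ ∀ x ∈ p.support, ∃ u ∈ c.support, x = π u := by
    intro c hc ho
    obtain ⟨u, hu⟩ := hne c hc
    have h := exists_walk G π σ hσ c.support.card u
    rw [(cyc_toList σ c hc u hu).2] at h
    obtain ⟨p, hp, hs⟩ := h
    obtain ⟨w, q, hq, hqo, hqs⟩ := exists_odd_cycle G p (hp ▸ ho)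
    refine ⟨w, q, hq, hqo, fun x hx => ?_⟩
    obtain ⟨j, hj⟩ := hs x (hqs x hx)
    exact ⟨_, hit c hc u hu j, hj⟩
  have hD := edgeDec_sum G σ.cycleFactorsFinset (fun c => c.support.val.map π) ?_ ?_
  · rw [hsum'] at hD
    rcases hD with ⟨_, h⟩ | ⟨h, _⟩
    · exact h
    · exfalso
      rw [Multiset.card_map, ← Nat.not_even_iff_odd] at h
      exact h hcard
  · intro c hc he
    obtain ⟨u, hu⟩ := hne c hc
    rw [Multiset.card_map] at he
    obtain ⟨m, hm⟩ := even_iff_exists_two_mul.1 he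
    have hm : c.support.card = 2 * m := hm
    rw [(cyc_toList σ c hc u hu).1, hm]
    exact edgeDec_iterate G π σ hσ m u
  · intro c hc d hd hcd hco hdo
    rw [Multiset.card_map] at hco hdo
    have hco : Odd c.support.card := hco
    have hdo : Odd d.support.card := hdo
    have key : ∃ u ∈ c.support, ∃ w ∈ d.support, G.Adj (π u) (π w) := by
      obtain ⟨v, p, hp, hpo, hps⟩ := hocyc c hc hco
      obtain ⟨w, q, hq, hqo, hqs⟩ := hocyc d hd hdo
      by_cases hdis : ∀ x ∈ p.support, x ∉ q.support
      · obtain ⟨x, hx, y, hy, hxy⟩ := hG v w p q hp hq hpo hqo hdis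
        obtain ⟨a, ha, rfl⟩ := hps x hx
        obtain ⟨b, hb, rfl⟩ := hqs y hy
        exact ⟨a, ha, b, hb, hxy⟩
      · push Not at hdis
        obtain ⟨x, hx, hx'⟩ := hdis
        obtain ⟨a, ha, h1⟩ := hps x hx
        obtain ⟨b, hb, h2⟩ := hqs x hx'
        refine ⟨a, ha, σ b, (Equiv.Perm.mem_cycleFactorsFinset_support hd _).2 hb, ?_⟩
        rw [← h1, h2]
        exact hσ b
    obtain ⟨u, hu, w, hw, huw⟩ := key
    obtain ⟨m, hm⟩ := hco
    obtain ⟨m', hm'⟩ := hdo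
    rw [(cyc_toList σ c hc u hu).1, (cyc_toList σ d hd w hw).1, hm, hm']
    exact edgeDec_iterate_pair G π σ hσ m m' u w huw

lemma idp_of_odd {n : ℕ} (G : SimpleGraph (Fin n))
    (hG : ∀ (v w : Fin n) (c : G.Walk v v) (c' : G.Walk w w),
        c.IsCycle → c'.IsCycle → Odd c.length → Odd c'.length →
        (∀ x ∈ c.support, x ∉ c'.support) →
        ∃ x ∈ c.support, ∃ y ∈ c'.support, G.Adj x y) : HasIDP (edgePolytope G) := by
  classical
  rintro N hN x ⟨y, hy, rfl⟩ hlat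
  have hNpos : (0 : ℝ) < N := by exact_mod_cast hN
  have hnat : ∀ i, ∃ k : ℕ, (N : ℝ) * y i = k := by
    intro i
    obtain ⟨z, hz⟩ := hlat i
    have hz : (N : ℝ) * y i = z := hz
    have : (0 : ℝ) ≤ z := by
      rw [← hz]; exact mul_nonneg hNpos.le (ep_nonneg G y hy i)
    have : 0 ≤ z := by exact_mod_cast this
    lift z to ℕ using this
    exact ⟨z, by simpa using hz⟩
  choose k hk using hnat
  have hksum : ∑ v, k v = 2 * N := by
    have h := ep_sum G y hy
    have : ((∑ v, k v : ℕ) : ℝ) = ((2 * N : ℕ) : ℝ) := by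
      push_cast
      simp only [← hk]
      rw [← Finset.mul_sum, h]; ring
    exact_mod_cast this
  have hkhall : ∀ A : Finset (Fin n), ∑ v ∈ A, k v ≤
      ∑ v ∈ Finset.univ.filter (fun v => ∃ a ∈ A, G.Adj a v), k v := by
    intro A
    have h := mul_le_mul_of_nonneg_left (ep_hall G y hy A) hNpos.le
    rw [Finset.mul_sum, Finset.mul_sum] at h
    simp only [hk] at h
    exact_mod_cast h
  let α := Σ v : Fin n, Fin (k v)
  have hcardS : ∀ A : Finset (Fin n), (A.sigma (fun v => (Finset.univ : Finset (Fin (k v))))).card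
      = ∑ v ∈ A, k v := by
    intro A; simp
  obtain ⟨f, hfi, hf⟩ := (Fintype.all_card_le_filter_rel_iff_exists_injective
    (fun a b : α => G.Adj a.1 b.1)).1 (by
      intro S
      calc S.card ≤ ((S.image Sigma.fst).sigma (fun v => (Finset.univ : Finset (Fin (k v))))).card := by
            apply Finset.card_le_card
            intro a ha
            rw [Finset.mem_sigma]
            exact ⟨Finset.mem_image_of_mem _ ha, Finset.mem_univ _⟩
        _ ≤ ∑ v ∈ Finset.univ.filter (fun v => ∃ a ∈ S.image Sigma.fst, G.Adj a v), k v := by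
            rw [hcardS]; exact hkhall _
        _ = _ := (hcardS _).symm
        _ ≤ _ := by
            apply Finset.card_le_card
            intro b hb
            rw [Finset.mem_sigma, Finset.mem_filter] at hb
            obtain ⟨⟨_, a, ha, hab⟩, _⟩ := hb
            obtain ⟨a', ha', rfl⟩ := Finset.mem_image.1 ha
            rw [Finset.mem_filter]
            exact ⟨Finset.mem_univ _, a', ha', hab⟩)
  let σ : Equiv.Perm α := Equiv.ofBijective f (Finite.injective_iff_bijective.1 hfi)
  have hcα : Fintype.card α = 2 * N := by
    rw [← hksum]; simp [α]
  have hD := edgeDec_perm G (Sigma.fst : α → Fin n) σ hf hG (by rw [hcα]; simp)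
  obtain ⟨m, hm, g, hg, hs⟩ := hD.exists_fun
  rw [Multiset.card_map] at hm
  have hmN : m = N := by
    have : Fintype.card α = 2 * m := hm
    omega
  subst hmN
  have hcount : ∀ v, (((Finset.univ : Finset α).val.map Sigma.fst).count v) = k v := by
    intro v
    rw [Multiset.count_map]
    have h2 := hcardS {v}
    rw [Finset.sum_singleton] at h2
    rw [← h2, ← Finset.filter_val, Finset.card_val]
    congr 1
    ext a
    simp [eq_comm]
  refine ⟨g, ?_, ?_⟩
  · intro i
    obtain ⟨a, b, hab, h⟩ := hg i
    constructor
    · exact subset_convexHull _ _ ⟨a, b, hab, h⟩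
    · intro v
      rw [h]
      refine ⟨(if v = a then 1 else 0) + (if v = b then 1 else 0), ?_⟩
      simp [Pi.single_apply]
  · funext v
    have := hs v
    rw [hcount, ← hk] at this
    simpa using this

open Classical in
/-- sum of unit vectors along a walk (last vertex omitted) -/
noncomputable def walkVec {n : ℕ} {G : SimpleGraph (Fin n)} {u v : Fin n} (c : G.Walk u v) :
    Fin n → ℝ :=
  ∑ i ∈ Finset.range c.length, Pi.single (c.getVert i) 1

lemma walkVec_mem {n : ℕ} {G : SimpleGraph (Fin n)} {u : Fin n} (c : G.Walk u u)
    (h : 0 < c.length) : (2 / (c.length : ℝ)) • walkVec c ∈ edgePolytope G := by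
  have hpos : (0 : ℝ) < c.length := by exact_mod_cast h
  have h1 : ∑ i ∈ Finset.range c.length, (1 / (c.length : ℝ)) •
      ((Pi.single (c.getVert i) 1 + Pi.single (c.getVert (i + 1)) 1 : Fin n → ℝ)) ∈
      edgePolytope G := by
    apply (convex_convexHull ℝ _).sum_mem
    · intro i _; positivity
    · simp; field_simp
    · intro i hi
      exact subset_convexHull _ _ ⟨_, _, c.adj_getVert_succ (Finset.mem_range.1 hi), rfl⟩
  have h2 : ∑ i ∈ Finset.range c.length, (Pi.single (c.getVert (i + 1)) 1 : Fin n → ℝ) =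
      walkVec c := by
    have e1 := Finset.sum_range_succ (fun i => (Pi.single (c.getVert i) 1 : Fin n → ℝ)) c.length
    have e2 := Finset.sum_range_succ' (fun i => (Pi.single (c.getVert i) 1 : Fin n → ℝ)) c.length
    rw [e1] at e2
    simp only [SimpleGraph.Walk.getVert_length, SimpleGraph.Walk.getVert_zero] at e2
    exact (add_right_cancel e2).symm
  rw [← Finset.smul_sum, Finset.sum_add_distrib, h2] at h1
  convert h1 using 1
  change _ = (1 / (c.length : ℝ)) • (walkVec c + walkVec c)
  rw [← two_smul ℝ (walkVec c), smul_smul]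
  congr 1; ring

lemma walkVec_sum {n : ℕ} {G : SimpleGraph (Fin n)} {u v : Fin n} (c : G.Walk u v)
    (A : Finset (Fin n)) : ∑ a ∈ A, walkVec c a =
      ∑ i ∈ Finset.range c.length, if c.getVert i ∈ A then (1 : ℝ) else 0 := by
  simp only [walkVec, Finset.sum_apply]
  rw [Finset.sum_comm]
  apply Finset.sum_congr rfl
  intro i _
  simp [Pi.single_apply]

lemma walkVec_lat {n : ℕ} {G : SimpleGraph (Fin n)} {u v : Fin n} (c : G.Walk u v) (a : Fin n) :
    ∃ z : ℤ, walkVec c a = z := by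
  refine ⟨∑ i ∈ Finset.range c.length, if c.getVert i ∈ ({a} : Finset (Fin n)) then 1 else 0, ?_⟩
  have := walkVec_sum c {a}
  rw [Finset.sum_singleton] at this
  rw [this]
  push_cast
  rfl

lemma odd_of_idp {n : ℕ} (G : SimpleGraph (Fin n)) (hI : HasIDP (edgePolytope G))
    (v w : Fin n) (c : G.Walk v v) (c' : G.Walk w w)
    (ho : Odd c.length) (ho' : Odd c'.length)
    (hdis : ∀ x ∈ c.support, x ∉ c'.support) :
    ∃ x ∈ c.support, ∃ y ∈ c'.support, G.Adj x y := by
  classical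
  by_contra hno
  push Not at hno
  obtain ⟨N, hN⟩ := ho.add_odd ho'
  have hl := ho.pos
  have hl' := ho'.pos
  have hpos : (0 : ℝ) < c.length := by exact_mod_cast hl
  have hpos' : (0 : ℝ) < c'.length := by exact_mod_cast hl'
  have hNR : (N : ℝ) = ((c.length : ℝ) + c'.length) / 2 := by
    have : ((c.length + c'.length : ℕ) : ℝ) = ((N + N : ℕ) : ℝ) := by rw [hN]
    push_cast at this
    linarith
  let A := c.support.toFinset
  let B := c'.support.toFinset
  obtain ⟨f, hf, hx⟩ := hI N (by omega) (walkVec c + walkVec c') (by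
    refine ⟨((c.length : ℝ) / (c.length + c'.length)) • ((2 / (c.length : ℝ)) • walkVec c) +
      ((c'.length : ℝ) / (c.length + c'.length)) • ((2 / (c'.length : ℝ)) • walkVec c'), ?_, ?_⟩
    · apply (convex_convexHull ℝ _) (walkVec_mem c hl) (walkVec_mem c' hl')
      · positivity
      · positivity
      · field_simp
    · funext a
      simp only [Pi.smul_apply, Pi.add_apply, smul_eq_mul, hNR]
      field_simp) (by
    intro a
    obtain ⟨z, hz⟩ := walkVec_lat c a
    obtain ⟨z', hz'⟩ := walkVec_lat c' a
    exact ⟨z + z', by simp [hz, hz']⟩)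
  have hsumA : ∑ a ∈ A, (walkVec c + walkVec c') a = c.length := by
    simp only [Pi.add_apply]
    rw [Finset.sum_add_distrib, walkVec_sum, walkVec_sum]
    rw [Finset.sum_congr rfl (g := fun _ => (1 : ℝ)), Finset.sum_congr (s₁ := Finset.range c'.length) rfl (g := fun _ => (0 : ℝ))]
    · simp
    · intro i _
      rw [if_neg]
      intro h
      exact hdis _ (List.mem_toFinset.1 h) (c'.getVert_mem_support i)
    · intro i _
      rw [if_pos]
      exact List.mem_toFinset.2 (c.getVert_mem_support i)
  have hzero : ∀ a, a ∉ A → a ∉ B → (walkVec c + walkVec c') a = 0 := by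
    intro a ha hb
    have e1 := walkVec_sum c {a}
    have e2 := walkVec_sum c' {a}
    rw [Finset.sum_singleton] at e1 e2
    rw [Pi.add_apply, e1, e2, Finset.sum_eq_zero, Finset.sum_eq_zero, add_zero]
    · intro i _
      rw [if_neg]
      intro h
      rw [Finset.mem_singleton] at h
      exact hb (List.mem_toFinset.2 (h ▸ c'.getVert_mem_support i))
    · intro i _
      rw [if_neg]
      intro h
      rw [Finset.mem_singleton] at h
      exact ha (List.mem_toFinset.2 (h ▸ c.getVert_mem_support i))
  have hfz : ∀ k a, a ∉ A → a ∉ B → f k a = 0 := by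
    intro k a ha hb
    have h := hzero a ha hb
    rw [hx, Finset.sum_apply] at h
    exact (Finset.sum_eq_zero_iff_of_nonneg (fun k _ => ep_nonneg G _ (hf k).1 a)).1 h k
      (Finset.mem_univ _)
  have heven : ∀ k, ∃ z : ℤ, ∑ a ∈ A, f k a = 2 * z := by
    intro k
    obtain ⟨hP, hL⟩ := hf k
    have hnn := ep_nonneg G _ hP
    choose z hz using hL
    have hsz : ∑ a ∈ A, f k a = ((∑ a ∈ A, z a : ℤ) : ℝ) := by
      push_cast; exact Finset.sum_congr rfl fun a _ => hz a
    have h0 : (0 : ℝ) ≤ ∑ a ∈ A, f k a := Finset.sum_nonneg fun a _ => hnn a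
    have h2 : ∑ a ∈ A, f k a ≤ 2 := by
      rw [← ep_sum G _ hP]
      exact Finset.sum_le_sum_of_subset_of_nonneg (Finset.subset_univ _) fun a _ _ => hnn a
    rw [hsz] at h0 h2
    have h0 : 0 ≤ ∑ a ∈ A, z a := by exact_mod_cast h0
    have h2 : ∑ a ∈ A, z a ≤ 2 := by exact_mod_cast h2
    by_cases h1 : ∑ a ∈ A, z a = 1
    · exfalso
      obtain ⟨i, hi, hzi⟩ : ∃ i ∈ A, 0 < z i := by
        by_contra hcon
        push Not at hcon
        have := Finset.sum_nonpos hcon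
        omega
      have hfi : (1 : ℝ) ≤ f k i := by rw [hz]; exact_mod_cast hzi
      have hh := ep_hall G _ hP {i}
      rw [Finset.sum_singleton] at hh
      have hle : ∑ v ∈ Finset.univ.filter (fun v => ∃ a ∈ ({i} : Finset (Fin n)), G.Adj a v), f k v
          ≤ ∑ v ∈ A.erase i, f k v := by
        rw [← Finset.sum_filter_add_sum_filter_not _ (fun v => v ∈ A)]
        have hz2 : ∑ v ∈ (Finset.univ.filter
            (fun v => ∃ a ∈ ({i} : Finset (Fin n)), G.Adj a v)).filter (fun v => ¬ v ∈ A), f k v = 0 := by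
          apply Finset.sum_eq_zero
          intro v hv
          simp only [Finset.mem_filter, Finset.mem_univ, true_and, Finset.mem_singleton,
            exists_eq_left] at hv
          apply hfz k v hv.2
          intro hvB
          exact hno i (List.mem_toFinset.1 hi) v (List.mem_toFinset.1 hvB) hv.1
        rw [hz2, add_zero]
        apply Finset.sum_le_sum_of_subset_of_nonneg _ fun a _ _ => hnn a
        intro v hv
        simp only [Finset.mem_filter, Finset.mem_univ, true_and, Finset.mem_singleton,
            exists_eq_left] at hv
        exact Finset.mem_erase.2 ⟨hv.1.ne', hv.2⟩
      have he := Finset.add_sum_erase A (f k) hi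
      rw [hsz, h1] at he
      push_cast at he
      linarith
    · have : ∑ a ∈ A, z a = 0 ∨ ∑ a ∈ A, z a = 2 := by omega
      rcases this with h | h
      · exact ⟨0, by rw [hsz, h]; simp⟩
      · exact ⟨1, by rw [hsz, h]; simp⟩
  choose z hz using heven
  rw [hx] at hsumA
  simp only [Finset.sum_apply] at hsumA
  rw [Finset.sum_comm] at hsumA
  simp only [hz] at hsumA
  rw [← Finset.mul_sum] at hsumA
  have : 2 * ∑ k, z k = (c.length : ℤ) := by exact_mod_cast hsumA
  obtain ⟨m, hm⟩ := ho
  omega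

theorem stmt10 (n : ℕ) (G : SimpleGraph (Fin n))
    (hiso : ∀ v : Fin n, ∃ w, G.Adj v w) (hconn : G.Connected) :
    HasIDP (edgePolytope G) ↔
      ∀ (v w : Fin n) (c : G.Walk v v) (c' : G.Walk w w),
        c.IsCycle → c'.IsCycle → Odd c.length → Odd c'.length →
        (∀ x ∈ c.support, x ∉ c'.support) →
        ∃ x ∈ c.support, ∃ y ∈ c'.support, G.Adj x y := by
  constructor
  · intro hI v w c c' _ _ ho ho' hdis
    exact odd_of_idp G hI v w c c' ho ho' hdis
  · exact idp_of_odd G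
end
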